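/- arXiv:math/0602148 — 2 statements merged into one kernel-verified Lean document; each statement's English description precedes it below -/
import Mathlib

section
/- For every n ≥ 2, the group K_n is finitely generated. -/
open FreeGroup

/-- The free group on `n` generators. -/
abbrev FG (n : ℕ) : Type := FreeGroup (Fin n)

/-- The pure symmetric automorphism group `PΣ_n`: automorphisms sending each
generator to a conjugate of itself. -/
def PSigmaAut (n : ℕ) : Subgroup (MulAut (FG n)) where
  carrier := {φ | ∀ i : Fin n, ∃ w : FG n, φ (of i) = w * of i * w⁻¹}
  one_mem' := fun i => ⟨1, by simp⟩
  mul_mem' := by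
    rintro φ ψ hφ hψ i
    obtain ⟨w, hw⟩ := hψ i
    obtain ⟨v, hv⟩ := hφ i
    refine ⟨φ w * v, ?_⟩
    simp only [MulAut.mul_apply, hw, _root_.map_mul, _root_.map_inv, hv, mul_inv_rev, mul_assoc]
  inv_mem' := by
    intro φ hφ i
    obtain ⟨w, hw⟩ := hφ i
    refine ⟨(φ⁻¹ w)⁻¹, ?_⟩
    refine φ.injective ?_
    simp only [MulAut.apply_inv_self, _root_.map_mul, _root_.map_inv, inv_inv, hw]
    group

/-- The projection `F_n → F_{n-1}` sending `x_n ↦ 1` and `x_i ↦ x_i` for `i < n-1`. -/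
def projHom (n : ℕ) : FG n →* FG (n - 1) :=
  FreeGroup.lift fun i => if h : (i : ℕ) < n - 1 then of (⟨i, h⟩ : Fin (n - 1)) else 1

/-- The inclusion `F_{n-1} → F_n`. -/
def castHom (n : ℕ) : FG (n - 1) →* FG n :=
  FreeGroup.lift fun i => of (Fin.castLE (Nat.sub_le n 1) i)

/-- The endomorphism of `F_{n-1}` induced by an automorphism of `F_n`. -/
def desc (n : ℕ) (φ : MulAut (FG n)) : FG (n - 1) →* FG (n - 1) :=
  (projHom n).comp ((φ : FG n ≃* FG n).toMonoidHom.comp (castHom n))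

lemma desc_proj {n : ℕ} {φ : MulAut (FG n)} (hφ : φ ∈ PSigmaAut n) (x : FG n) :
    desc n φ (projHom n x) = projHom n (φ x) := by
  have : (desc n φ).comp (projHom n) = (projHom n).comp (φ : FG n ≃* FG n).toMonoidHom := by
    apply FreeGroup.ext_hom
    intro i
    by_cases h : (i : ℕ) < n - 1
    · simp only [MonoidHom.comp_apply, projHom, FreeGroup.lift_apply_of, dif_pos h]
      simp only [desc, MonoidHom.comp_apply, castHom, FreeGroup.lift_apply_of]
      congr 2
    · obtain ⟨w, hw⟩ := hφ i
      simp only [MonoidHom.comp_apply, projHom, FreeGroup.lift_apply_of, dif_neg h,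
        MulEquiv.coe_toMonoidHom, hw, _root_.map_mul, _root_.map_inv, _root_.map_one]
      simp
  exact DFunLike.congr_fun this x

lemma desc_mul {n : ℕ} {φ : MulAut (FG n)} (hφ : φ ∈ PSigmaAut n) (ψ : MulAut (FG n)) :
    desc n (φ * ψ) = (desc n φ).comp (desc n ψ) := by
  apply FreeGroup.ext_hom
  intro i
  simp only [desc, MonoidHom.comp_apply, MulEquiv.coe_toMonoidHom, MulAut.mul_apply]
  exact (desc_proj hφ _).symm

lemma desc_one (n : ℕ) : desc n 1 = MonoidHom.id (FG (n - 1)) := by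
  apply FreeGroup.ext_hom
  intro i
  simp only [desc, MonoidHom.comp_apply, MulEquiv.coe_toMonoidHom, MulAut.one_apply,
    castHom, FreeGroup.lift_apply_of, projHom, MonoidHom.id_apply]
  rw [dif_pos (show ((Fin.castLE (Nat.sub_le n 1) i : Fin n) : ℕ) < n - 1 from i.isLt)]
  exact congrArg of (Fin.ext rfl)

/-- The automorphism of `F_{n-1}` induced by an element of `PΣ_n`. -/
def descAut (n : ℕ) (φ : PSigmaAut n) : MulAut (FG (n - 1)) :=
  MonoidHom.toMulEquiv (desc n ↑φ) (desc n ↑(φ⁻¹))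
    (by
      rw [← desc_mul (φ⁻¹).2 ↑φ]
      norm_num [desc_one])
    (by
      rw [← desc_mul φ.2 ↑(φ⁻¹)]
      norm_num [desc_one])

lemma descAut_mem (n : ℕ) (φ : PSigmaAut n) : descAut n φ ∈ PSigmaAut (n - 1) := by
  intro i
  obtain ⟨w, hw⟩ := φ.2 (Fin.castLE (Nat.sub_le n 1) i)
  refine ⟨projHom n w, ?_⟩
  have : descAut n φ (of i) = projHom n ((φ : MulAut (FG n)) (of (Fin.castLE (Nat.sub_le n 1) i))) := by
    simp only [descAut, MonoidHom.toMulEquiv, MulEquiv.coe_mk, Equiv.coe_fn_mk, desc,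
      MonoidHom.comp_apply, MulEquiv.coe_toMonoidHom, castHom, FreeGroup.lift_apply_of]
  rw [this, hw]
  simp only [_root_.map_mul, _root_.map_inv, projHom, FreeGroup.lift_apply_of]
  rw [dif_pos (show ((Fin.castLE (Nat.sub_le n 1) i : Fin n) : ℕ) < n - 1 from i.isLt)]
  congr 2

/-- The homomorphism `π_n : PΣ_n → PΣ_{n-1}` induced by killing the last generator. -/
def piHom (n : ℕ) : PSigmaAut n →* PSigmaAut (n - 1) :=
  MonoidHom.mk' (fun φ => ⟨descAut n φ, descAut_mem n φ⟩)
    (by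
      intro φ ψ
      refine Subtype.ext (MulEquiv.ext fun x => ?_)
      show desc n ↑(φ * ψ) x = (descAut n φ * descAut n ψ) x
      rw [MulAut.mul_apply]
      show _ = desc n ↑φ (desc n ↑ψ x)
      rw [Subgroup.coe_mul, desc_mul φ.2]
      rfl)

/-- The kernel `K_n` of `π_n : PΣ_n → PΣ_{n-1}`. -/
def Kn (n : ℕ) : Subgroup (PSigmaAut n) := (piHom n).ker

/-- The monoid hom underlying `α_{ij}`: sends `x_i ↦ x_j x_i x_j⁻¹` and fixes the
other generators. -/
def alphaHom (n : ℕ) (i j : Fin n) : FG n →* FG n :=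
  FreeGroup.lift fun r => if r = i then of j * of i * (of j)⁻¹ else of r

/-- The inverse of `alphaHom`. -/
def alphaInvHom (n : ℕ) (i j : Fin n) : FG n →* FG n :=
  FreeGroup.lift fun r => if r = i then (of j)⁻¹ * of i * of j else of r

/-- The McCool generator `α_{ij} ∈ Aut(F_n)`, sending `x_i ↦ x_j x_i x_j⁻¹` and fixing
the other generators (defined to be the identity if `i = j`). -/
def alphaAut (n : ℕ) (i j : Fin n) : MulAut (FG n) :=
  if h : i = j then 1 else
    MonoidHom.toMulEquiv (alphaHom n i j) (alphaInvHom n i j)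
      (by
        apply FreeGroup.ext_hom
        intro r
        by_cases hr : r = i
        · subst hr
          simp [alphaHom, alphaInvHom, Ne.symm h, mul_assoc]
        · simp [alphaHom, alphaInvHom, hr])
      (by
        apply FreeGroup.ext_hom
        intro r
        by_cases hr : r = i
        · subst hr
          simp [alphaHom, alphaInvHom, Ne.symm h, mul_assoc]
        · simp [alphaHom, alphaInvHom, hr])

lemma alphaAut_apply_of (n : ℕ) {i j : Fin n} (hij : i ≠ j) (r : Fin n) :
    alphaAut n i j (of r) = if r = i then of j * of i * (of j)⁻¹ else of r := by
  simp only [alphaAut, dif_neg hij]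
  show alphaHom n i j (of r) = _
  simp [alphaHom]

lemma alphaAut_mem (n : ℕ) (i j : Fin n) : alphaAut n i j ∈ PSigmaAut n := by
  by_cases h : i = j
  · simp only [alphaAut, dif_pos h]
    exact (PSigmaAut n).one_mem
  · intro r
    rw [alphaAut_apply_of n h r]
    by_cases hr : r = i
    · subst hr
      exact ⟨of j, by simp⟩
    · exact ⟨1, by simp [hr]⟩

/-- `α_{ij}` as an element of `PΣ_n`. -/
def alphaP (n : ℕ) (i j : Fin n) : PSigmaAut n := ⟨alphaAut n i j, alphaAut_mem n i j⟩

/-!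
Suppose `φ x_i = w_i x_i w_i⁻¹`. As long as some `w_i` ends in `x_i^{±1}`, or some word `w_i x_i^e`
is a prefix of another word `w_j x_j^d`, the total length of the `w_i` can be decreased, in the
second case by composing `φ` with a McCool generator `α_{ji}^{±1}`. Otherwise a ping-pong argument
shows that the image of every nontrivial element starts with some `w_i x_i^e`, so surjectivity of
`φ` forces all `w_i` to be trivial. Hence the `α_{ij}` generate `PΣ_n`.

By McCool's relations, the `α_{ij}` with `i, j ≠ n` normalise the subgroup `N` generated by the
`α_{in}` and `α_{nj}`. So `PΣ_n = N H` with `N ≤ K_n`, where `H` is generated by the `α_{ij}` with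
`i, j ≠ n`. Since `π_n` is injective on `H`, it follows that `K_n = N`.
-/

section Conjugators

variable {α F : Type*} [FunLike F (FreeGroup α) (FreeGroup α)] {f : F} {w : α → FreeGroup α}

/-- A family of conjugators exhibiting `f` as a pure symmetric endomorphism. For a given `f` it is
not unique: each `w i` may be multiplied on the right by powers of `x_i`. -/
def IsConjugatorFamily (f : F) (w : α → FreeGroup α) : Prop :=
  ∀ i, f (of i) = w i * of i * (w i)⁻¹

lemma IsConjugatorFamily.map_mk_singleton [MonoidHomClass F (FreeGroup α) (FreeGroup α)]
    (hf : IsConjugatorFamily f w) (a : α × Bool) :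
    f (mk [a]) = w a.1 * mk [a] * (w a.1)⁻¹ := by
  obtain ⟨i, _ | _⟩ := a
  · have hinv : (mk [(i, false)] : FreeGroup α) = (of i)⁻¹ := rfl
    rw [hinv, _root_.map_inv, hf i]
    group
  · exact hf i

lemma commute_mk_singleton_of (a : α × Bool) : Commute (mk [a]) (of a.1) := by
  obtain ⟨i, _ | _⟩ := a
  · exact (Commute.refl (of i)).inv_left
  · exact Commute.refl (of i)

variable [DecidableEq α]

lemma IsConjugatorFamily.update_mul_mk_singleton (hf : IsConjugatorFamily f w) (a : α × Bool) :
    IsConjugatorFamily f (Function.update w a.1 (w a.1 * mk [a])) := by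
  intro k
  rcases eq_or_ne k a.1 with rfl | hk
  · rw [Function.update_self, hf, mul_inv_rev, mul_assoc (w a.1) (mk [a]),
      (commute_mk_singleton_of a).eq]
    group
  · rw [Function.update_of_ne hk, hf]

lemma prefix_toWord_mul {x y : FreeGroup α} {a : α × Bool}
    (hx : IsReduced (x.toWord ++ [a])) (hy : y ∈ startsWith a) :
    x.toWord ++ [a] <+: (x * y).toWord := by
  obtain ⟨t, ht⟩ : ∃ t, y.toWord = a :: t := by
    simpa [startsWith, ← List.head?_eq_getElem?, List.head?_eq_some_iff] using hy
  have hred : IsReduced (x.toWord ++ [a] ++ t) :=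
    hx.append_overlap (by simpa [ht] using isReduced_toWord (x := y)) (List.cons_ne_nil a [])
  exact ⟨t, by rw [toWord_mul, ht, List.append_cons x.toWord a t, hred.reduce_eq]⟩

lemma norm_mul_mk_singleton_lt {x : FreeGroup α} {a : α × Bool}
    (hx : ¬ IsReduced (x.toWord ++ [a])) : norm (x * mk [a]) < norm x := by
  have hred : Red (x.toWord ++ [a]) (x * mk [a]).toWord := by
    rw [toWord_mul, toWord_mk, reduce_singleton]
    exact reduce.red
  obtain ⟨k, hk⟩ := Red.length hred
  have hk0 : k ≠ 0 := by
    rintro rfl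
    exact hx (hred.sublist.eq_of_length (by omega) ▸ isReduced_toWord)
  rw [List.length_append, List.length_singleton] at hk
  simp only [FreeGroup.norm]
  omega

/-- The word of `w_i x_i^e`, for a letter `a = x_i^e`. If `w` is a family of conjugators for `f`,
then `f a` is the product of this word and `w_i⁻¹`. -/
def stem (w : α → FreeGroup α) (a : α × Bool) : List (α × Bool) :=
  (w a.1).toWord ++ [a]

/-- A family of conjugators that admits no length-reducing move: no `w_i` ends in the letter
`x_i` or `x_i⁻¹`, and the stems form a prefix code. -/
structure IsTight (w : α → FreeGroup α) : Prop where
  isReduced_stem (a : α × Bool) : IsReduced (stem w a)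
  eq_of_prefix {a b : α × Bool} : stem w a <+: stem w b → a = b

lemma exists_eq_mul_of_stem_prefix {a b : α × Bool} (hab : a ≠ b)
    (h : stem w a <+: stem w b) :
    a.1 ≠ b.1 ∧ ∃ v, w b.1 = w a.1 * mk [a] * v ∧ norm (w a.1 * v) < norm (w b.1) := by
  obtain heq | ⟨v, hv⟩ := List.prefix_concat_iff.1 h
  · exact absurd (List.singleton_inj.1 (List.append_inj' heq rfl).2) hab
  have hlen : norm (w b.1) = norm (w a.1) + 1 + v.length := by
    rw [FreeGroup.norm, ← hv, stem, List.length_append, List.length_append, List.length_singleton,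
      FreeGroup.norm]
  refine ⟨fun h1 => ?_, mk v, ?_, ?_⟩
  · rw [h1] at hlen
    omega
  · rw [← mk_toWord (x := w b.1), ← hv, stem, ← mul_mk, ← mul_mk, mk_toWord]
  · have := norm_mul_le (w a.1) (mk v)
    have := norm_mk_le (L₁ := v)
    omega

lemma sum_norm_update_lt [Fintype α] {i : α} {v : FreeGroup α} (h : norm v < norm (w i)) :
    ∑ k, norm (Function.update w i v k) < ∑ k, norm (w k) := by
  refine Finset.sum_lt_sum (fun k _ => ?_) ⟨i, Finset.mem_univ i, by rwa [Function.update_self]⟩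
  rcases eq_or_ne k i with rfl | hk
  · rw [Function.update_self]
    exact h.le
  · rw [Function.update_of_ne hk]

variable [MonoidHomClass F (FreeGroup α) (FreeGroup α)]

-- Ping-pong on the sets of elements whose word starts with a given stem.
lemma IsConjugatorFamily.stem_prefix_map_mul (hf : IsConjugatorFamily f w)
    (hw : ∀ a, IsReduced (stem w a)) {a : α × Bool} {x : FreeGroup α}
    (hx : ¬ stem w (a.1, !a.2) <+: x.toWord) : stem w a <+: (f (mk [a]) * x).toWord := by
  have hstart : (w a.1)⁻¹ * x ∉ startsWith (a.1, !a.2) := fun h =>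
    hx (by simpa only [mul_inv_cancel_left, stem] using prefix_toWord_mul (hw (a.1, !a.2)) h)
  rw [hf.map_mk_singleton, mul_assoc, mul_assoc]
  exact prefix_toWord_mul (hw a) (startsWith_mk_mul _ hstart)

lemma IsConjugatorFamily.stem_prefix_map (hf : IsConjugatorFamily f w) (hw : IsTight w)
    {a : α × Bool} {L : List (α × Bool)} (hL : IsReduced (a :: L)) :
    stem w a <+: (f (mk (a :: L))).toWord := by
  induction L generalizing a with
  | nil =>
    rw [← mul_one (f _)]
    exact hf.stem_prefix_map_mul hw.isReduced_stem (by simp [stem])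
  | cons b L ih =>
    obtain ⟨hab, hbL⟩ := isReduced_cons_cons.1 hL
    rw [← List.singleton_append, ← mul_mk, _root_.map_mul]
    refine hf.stem_prefix_map_mul hw.isReduced_stem fun hinv => ?_
    have hb : (a.1, !a.2) = b := (List.prefix_or_prefix_of_prefix hinv (ih hbL)).elim
      hw.eq_of_prefix fun h => (hw.eq_of_prefix h).symm
    subst hb
    simp at hab

lemma IsConjugatorFamily.eq_one_of_surjective (hf : IsConjugatorFamily f w) (hw : IsTight w)
    (hsurj : Function.Surjective f) : w = 1 := by
  funext i
  obtain ⟨x, hx⟩ := hsurj (of i)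
  rcases hL : x.toWord with _ | ⟨a, L⟩
  · rw [toWord_eq_nil_iff.1 hL, _root_.map_one] at hx
    exact absurd hx (one_ne_of i)
  · have hpre : stem w a <+: [(i, true)] := by
      have := hf.stem_prefix_map hw (hL ▸ isReduced_toWord)
      rwa [← hL, mk_toWord, hx, toWord_of] at this
    obtain ⟨hnil, rfl⟩ : (w a.1).toWord = [] ∧ a = (i, true) := by
      simpa [stem, List.prefix_cons_iff, List.append_eq_cons_iff] using hpre
    exact toWord_eq_nil_iff.1 hnil

end Conjugators

section McCool

variable {n : ℕ}

lemma PSigmaAut.ext_of {φ ψ : PSigmaAut n}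
    (h : ∀ i, (φ : MulAut (FG n)) (of i) = (ψ : MulAut (FG n)) (of i)) : φ = ψ :=
  Subtype.ext (MulEquiv.toMonoidHom_injective (FreeGroup.ext_hom _ _ h))

lemma alphaP_self (i : Fin n) : alphaP n i i = 1 :=
  Subtype.ext (dif_pos rfl)

lemma alphaP_apply_of (i j r : Fin n) :
    (alphaP n i j : MulAut (FG n)) (of r) =
      if r = i then of j * of i * (of j)⁻¹ else of r := by
  rcases eq_or_ne i j with rfl | hij
  · rw [alphaP_self, mul_inv_cancel_right]
    split_ifs with h
    · rw [h]; rfl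
    · rfl
  · exact alphaAut_apply_of n hij r

lemma alphaP_inv_apply_of {i j : Fin n} (hij : i ≠ j) (r : Fin n) :
    ((alphaP n i j)⁻¹ : PSigmaAut n).1 (of r) =
      if r = i then (of j)⁻¹ * of i * of j else of r := by
  apply (alphaP n i j).1.injective
  rw [InvMemClass.coe_inv, MulAut.apply_inv_self]
  split_ifs with h
  · simp only [_root_.map_mul, _root_.map_inv, alphaP_apply_of, if_pos, if_neg hij.symm, h]
    group
  · rw [alphaP_apply_of, if_neg h]

variable {M : Subgroup (PSigmaAut n)}

lemma exists_mem_apply_of_eq_conj (hM : ∀ i j, alphaP n i j ∈ M) {i : Fin n}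
    {a : Fin n × Bool} (ha : a.1 ≠ i) :
    ∃ β ∈ M, ∀ r, (β : MulAut (FG n)) (of r) =
      if r = i then (mk [a])⁻¹ * of i * mk [a] else of r := by
  obtain ⟨j, _ | _⟩ := a
  · exact ⟨alphaP n i j, hM i j, alphaP_apply_of i j⟩
  · exact ⟨(alphaP n i j)⁻¹, M.inv_mem (hM i j), alphaP_inv_apply_of ha.symm⟩

lemma exists_conjugatorFamily_mul_sum_norm_lt (hM : ∀ i j, alphaP n i j ∈ M) {φ : PSigmaAut n}
    {w : Fin n → FG n} (hφ : IsConjugatorFamily (φ : MulAut (FG n)) w) {a b : Fin n × Bool}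
    (hab : a ≠ b) (hpre : stem w a <+: stem w b) :
    ∃ β ∈ M, ∃ w', IsConjugatorFamily ((φ * β : PSigmaAut n) : MulAut (FG n)) w' ∧
      ∑ k, norm (w' k) < ∑ k, norm (w k) := by
  obtain ⟨hne, v, hv, hlt⟩ := exists_eq_mul_of_stem_prefix hab hpre
  obtain ⟨β, hβM, hβ⟩ := exists_mem_apply_of_eq_conj hM hne
  refine ⟨β, hβM, Function.update w b.1 (w a.1 * v), fun k => ?_, sum_norm_update_lt hlt⟩
  rw [Subgroup.coe_mul, MulAut.mul_apply, hβ]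
  rcases eq_or_ne k b.1 with rfl | hk
  · rw [if_pos rfl, Function.update_self, _root_.map_mul, _root_.map_mul, _root_.map_inv,
      hφ.map_mk_singleton, hφ, hv]
    group
  · rw [if_neg hk, Function.update_of_ne hk, hφ]

lemma mem_of_isConjugatorFamily (hM : ∀ i j, alphaP n i j ∈ M) {φ : PSigmaAut n}
    {w : Fin n → FG n} (hφ : IsConjugatorFamily (φ : MulAut (FG n)) w) : φ ∈ M := by
  induction hN : ∑ k, norm (w k) using Nat.strong_induction_on generalizing φ w with
  | _ N ih =>
  subst hN
  by_cases hred : ∀ a, IsReduced (stem w a)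
  · by_cases hpre : ∀ a b, stem w a <+: stem w b → a = b
    · have hw : w = 1 := hφ.eq_one_of_surjective ⟨hred, hpre _ _⟩ φ.1.surjective
      have hφ1 : φ = 1 := PSigmaAut.ext_of fun i => by simp [hφ i, hw]
      exact hφ1 ▸ M.one_mem
    · push Not at hpre
      obtain ⟨a, b, hpre, hab⟩ := hpre
      obtain ⟨β, hβ, w', hw', hlt⟩ := exists_conjugatorFamily_mul_sum_norm_lt hM hφ hab hpre
      exact (M.mul_mem_cancel_right hβ).1 (ih _ hlt hw' rfl)
  · push Not at hred
    obtain ⟨a, ha⟩ := hred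
    exact ih _ (sum_norm_update_lt (norm_mul_mk_singleton_lt ha))
      (hφ.update_mul_mk_singleton a) rfl

theorem eq_top_of_forall_alphaP_mem (hM : ∀ i j, alphaP n i j ∈ M) : M = ⊤ := by
  refine eq_top_iff.2 fun φ _ => ?_
  choose w hw using φ.2
  exact mem_of_isConjugatorFamily hM hw

lemma commute_alphaP {i j k l : Fin n} (hik : i ≠ k) (hil : i ≠ l) (hjk : j ≠ k) :
    Commute (alphaP n i j) (alphaP n k l) := by
  refine PSigmaAut.ext_of fun r => ?_
  simp only [Subgroup.coe_mul, MulAut.mul_apply]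
  rcases eq_or_ne r i with rfl | hri
  · simp [alphaP_apply_of, hik, hjk]
  · rcases eq_or_ne r k with rfl | hrk
    · simp [alphaP_apply_of, hri, hil.symm]
    · simp [alphaP_apply_of, hri, hrk]

lemma commute_alphaP_mul_alphaP {i j k : Fin n} (hij : i ≠ j) (hik : i ≠ k) :
    Commute (alphaP n i j * alphaP n k j) (alphaP n i k) := by
  refine PSigmaAut.ext_of fun r => ?_
  simp only [Subgroup.coe_mul, MulAut.mul_apply]
  rcases eq_or_ne r i with rfl | hri
  · simp [alphaP_apply_of, hij.symm, hik, hik.symm, mul_assoc]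
  · rcases eq_or_ne r k with rfl | hrk
    · simp [alphaP_apply_of, hij.symm, hri]
    · simp [alphaP_apply_of, hri, hrk]

end McCool

section Kernel

lemma conj_zpow_mem_of_commute {G : Type*} [Group G] {H : Subgroup G} {g h x : G}
    (hgh : Commute g h) (hx : Commute (g * h) x) (hh : h ∈ H) (hxH : x ∈ H) (k : ℤ) :
    g ^ k * x * (g ^ k)⁻¹ ∈ H := by
  have hx' : g ^ k * h ^ k * x = x * (g ^ k * h ^ k) := by
    rw [← hgh.mul_zpow]
    exact hx.zpow_left k
  have hconj : g ^ k * x * (g ^ k)⁻¹ = (h ^ k)⁻¹ * x * h ^ k := by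
    rw [mul_inv_eq_iff_eq_mul, mul_assoc, mul_assoc, eq_inv_mul_iff_mul_eq, ← mul_assoc,
      ← (hgh.zpow_zpow k k).eq, hx']
  rw [hconj]
  exact H.mul_mem (H.mul_mem (H.inv_mem (H.zpow_mem hh k)) hxH) (H.zpow_mem hh k)

open scoped Pointwise in
lemma eq_of_le_sup_of_disjoint {G : Type*} [Group G] {N H K : Subgroup G} (hNK : N ≤ K)
    (hK : K ≤ N ⊔ H) (hH : H ≤ Subgroup.normalizer (N : Set G)) (hHK : Disjoint H K) :
    K = N := by
  have hmul := Subgroup.mul_inf_assoc N H K hNK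
  rw [hHK.eq_bot, ← Subgroup.coe_mul_of_right_le_normalizer_left N H hH,
    Set.inter_eq_right.2 hK, Subgroup.coe_bot, Set.singleton_one, mul_one] at hmul
  exact SetLike.coe_injective hmul.symm

variable {n : ℕ} {l : Fin n}

/-- The McCool generators `α_{pl}` and `α_{lp}`, which turn out to generate `K_n` for `l` the
last index. The index `p = l` only contributes the identity. -/
def incidentGens (l : Fin n) : Set (PSigmaAut n) :=
  Set.range (fun p => alphaP n p l) ∪ Set.range (alphaP n l)

/-- The McCool generators `α_{ij}` with `i` and `j` different from `l`. -/
def avoidingGens (l : Fin n) : Set (PSigmaAut n) :=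
  {φ | ∃ i j, i ≠ l ∧ j ≠ l ∧ alphaP n i j = φ}

lemma finite_incidentGens (l : Fin n) : (incidentGens l).Finite :=
  (Set.finite_range _).union (Set.finite_range _)

lemma closure_incidentGens_sup_closure_avoidingGens (l : Fin n) :
    Subgroup.closure (incidentGens l) ⊔ Subgroup.closure (avoidingGens l) = ⊤ := by
  rw [← Subgroup.closure_union]
  refine eq_top_of_forall_alphaP_mem fun i j => Subgroup.subset_closure ?_
  rcases eq_or_ne i l with rfl | hi
  · exact Or.inl (Or.inr ⟨j, rfl⟩)
  rcases eq_or_ne j l with rfl | hj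
  · exact Or.inl (Or.inl ⟨i, rfl⟩)
  · exact Or.inr ⟨i, j, hi, hj, rfl⟩

lemma alphaP_mem_normalizer {i j : Fin n} (hi : i ≠ l) (hj : j ≠ l) (hij : i ≠ j) :
    alphaP n i j ∈
      Subgroup.normalizer (Subgroup.closure (incidentGens l) : Set (PSigmaAut n)) := by
  set N := Subgroup.closure (incidentGens l)
  have hto (p : Fin n) : alphaP n p l ∈ N := Subgroup.subset_closure (Or.inl ⟨p, rfl⟩)
  have hfrom (p : Fin n) : alphaP n l p ∈ N := Subgroup.subset_closure (Or.inr ⟨p, rfl⟩)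
  have hcomm {x : PSigmaAut n} (h : Commute (alphaP n i j) x) (hx : x ∈ N) (k : ℤ) :
      alphaP n i j ^ k * x * (alphaP n i j ^ k)⁻¹ ∈ N :=
    conj_zpow_mem_of_commute (Commute.one_right _) (by rwa [mul_one]) N.one_mem hx k
  have hlj : Commute (alphaP n i j) (alphaP n l j) := commute_alphaP hi hij hj
  have hil (k : ℤ) : alphaP n i j ^ k * alphaP n i l * (alphaP n i j ^ k)⁻¹ ∈ N :=
    conj_zpow_mem_of_commute hlj (commute_alphaP_mul_alphaP hij hi) (hfrom j) (hto i) k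
  refine (Subgroup.le_normalizer_closure_iff.2 ?_) (Subgroup.mem_zpowers (alphaP n i j))
  rintro _ ⟨k, rfl⟩ _ (⟨p, rfl⟩ | ⟨p, rfl⟩)
  · rcases eq_or_ne p i with rfl | hpi
    · exact hil k
    rcases eq_or_ne p j with rfl | hpj
    -- `α_{ij}` commutes with `α_{il} α_{jl}`, so this case reduces to the conjugate of `α_{il}`.
    · refine (N.mul_mem_cancel_left (hil k)).1 ?_
      convert hcomm (commute_alphaP_mul_alphaP hi hij).symm (N.mul_mem (hto i) (hto p)) k using 1
      group
    · exact hcomm (commute_alphaP hpi.symm hi hpj.symm) (hto p) k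
  · rcases eq_or_ne p i with rfl | hpi
    · refine conj_zpow_mem_of_commute hlj ?_ (hfrom j) (hfrom p) k
      rw [hlj.eq]
      exact commute_alphaP_mul_alphaP hj.symm hi.symm
    · exact hcomm (commute_alphaP hi hpi.symm hj) (hfrom p) k

lemma closure_avoidingGens_le_normalizer (l : Fin n) :
    Subgroup.closure (avoidingGens l) ≤
      Subgroup.normalizer (Subgroup.closure (incidentGens l) : Set (PSigmaAut n)) := by
  rw [Subgroup.closure_le]
  rintro _ ⟨i, j, hi, hj, rfl⟩
  rcases eq_or_ne i j with rfl | hij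
  · rw [alphaP_self]
    exact Subgroup.one_mem _
  · exact alphaP_mem_normalizer hi hj hij

lemma projHom_castHom (x : FG (n - 1)) : projHom n (castHom n x) = x :=
  DFunLike.congr_fun (desc_one n) x

lemma piHom_apply (φ : PSigmaAut n) (x : FG (n - 1)) :
    (piHom n φ : MulAut (FG (n - 1))) x = projHom n ((φ : MulAut (FG n)) (castHom n x)) := rfl

lemma projHom_of_eq_one (hl : (l : ℕ) = n - 1) : projHom n (of l) = 1 := by
  simp [projHom, hl]

lemma castHom_projHom_of (hl : (l : ℕ) = n - 1) {i : Fin n} (hi : i ≠ l) :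
    castHom n (projHom n (of i)) = of i := by
  have hlt : (i : ℕ) < n - 1 := by omega
  simp [projHom, castHom, hlt]

lemma mem_Kn_of_projHom_apply_of {φ : PSigmaAut n}
    (h : ∀ i, projHom n ((φ : MulAut (FG n)) (of i)) = projHom n (of i)) : φ ∈ Kn n := by
  have hproj (x : FG n) : projHom n ((φ : MulAut (FG n)) x) = projHom n x :=
    DFunLike.congr_fun (FreeGroup.ext_hom
      ((projHom n).comp (MulEquiv.toMonoidHom (φ : MulAut (FG n)))) (projHom n) h) x
  refine MonoidHom.mem_ker.2 (PSigmaAut.ext_of fun i => ?_)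
  rw [piHom_apply, hproj, projHom_castHom]
  rfl

lemma closure_incidentGens_le_Kn (hl : (l : ℕ) = n - 1) :
    Subgroup.closure (incidentGens l) ≤ Kn n := by
  rw [Subgroup.closure_le]
  rintro _ (⟨p, rfl⟩ | ⟨p, rfl⟩) <;> refine mem_Kn_of_projHom_apply_of fun r => ?_ <;>
    rw [alphaP_apply_of] <;> split_ifs with hr <;> simp [hr, projHom_of_eq_one hl]

/-- The automorphisms that fix `x_l` and preserve `F_{n-1}`. For `l` the last index this is the
copy of `PΣ_{n-1}` in `PΣ_n` on which `π_n` restricts to an isomorphism. -/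
def extensionSubgroup (l : Fin n) : Subgroup (PSigmaAut n) where
  carrier := {φ | (φ : MulAut (FG n)) (of l) = of l ∧ ∀ x,
    (φ : MulAut (FG n)) (castHom n x) = castHom n ((piHom n φ : MulAut (FG (n - 1))) x)}
  one_mem' := ⟨rfl, fun x => by simp⟩
  mul_mem' := by
    rintro φ ψ ⟨hφl, hφ⟩ ⟨hψl, hψ⟩
    refine ⟨?_, fun x => ?_⟩
    · rw [Subgroup.coe_mul, MulAut.mul_apply, hψl, hφl]
    · rw [Subgroup.coe_mul, MulAut.mul_apply, hψ, hφ, _root_.map_mul, Subgroup.coe_mul,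
        MulAut.mul_apply]
  inv_mem' := by
    rintro φ ⟨hφl, hφ⟩
    refine ⟨φ.1.injective ?_, fun x => φ.1.injective ?_⟩ <;>
      rw [InvMemClass.coe_inv, MulAut.apply_inv_self]
    · exact hφl.symm
    · rw [hφ, _root_.map_inv, InvMemClass.coe_inv, MulAut.apply_inv_self]

lemma closure_avoidingGens_le_extensionSubgroup (hl : (l : ℕ) = n - 1) :
    Subgroup.closure (avoidingGens l) ≤ extensionSubgroup l := by
  rw [Subgroup.closure_le]
  rintro _ ⟨i, j, hi, hj, rfl⟩
  refine ⟨by rw [alphaP_apply_of, if_neg hi.symm], fun x => ?_⟩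
  refine DFunLike.congr_fun (FreeGroup.ext_hom
    ((MulEquiv.toMonoidHom (alphaP n i j : MulAut (FG n))).comp (castHom n))
    ((castHom n).comp (MulEquiv.toMonoidHom (piHom n (alphaP n i j) : MulAut (FG (n - 1)))))
    fun r => ?_) x
  have hr : Fin.castLE (Nat.sub_le n 1) r ≠ l := fun h => by
    have := congrArg Fin.val h
    rw [Fin.val_castLE] at this
    omega
  have hcast : castHom n (of r) = of (Fin.castLE (Nat.sub_le n 1) r) := FreeGroup.lift_apply_of
  simp only [MonoidHom.comp_apply, MulEquiv.coe_toMonoidHom, piHom_apply, hcast, alphaP_apply_of]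
  split_ifs <;> simp only [_root_.map_mul, _root_.map_inv, castHom_projHom_of hl hi,
    castHom_projHom_of hl hj, castHom_projHom_of hl hr]

lemma disjoint_extensionSubgroup_Kn (hl : (l : ℕ) = n - 1) :
    Disjoint (extensionSubgroup l) (Kn n) := by
  rw [Subgroup.disjoint_def]
  rintro φ ⟨hφl, hφ⟩ hker
  refine PSigmaAut.ext_of fun i => ?_
  rcases eq_or_ne i l with rfl | hi
  · exact hφl
  · rw [← castHom_projHom_of hl hi, hφ, MonoidHom.mem_ker.1 hker]
    rfl

theorem Kn_eq_closure_incidentGens (hl : (l : ℕ) = n - 1) :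
    Kn n = Subgroup.closure (incidentGens l) :=
  eq_of_le_sup_of_disjoint (closure_incidentGens_le_Kn hl)
    (by rw [closure_incidentGens_sup_closure_avoidingGens]; exact le_top)
    (closure_avoidingGens_le_normalizer l)
    ((disjoint_extensionSubgroup_Kn hl).mono_left (closure_avoidingGens_le_extensionSubgroup hl))

end Kernel

/-- STATEMENT 3: For every `n ≥ 2`, the group `K_n` is finitely generated. -/
theorem statement3 (n : ℕ) (hn : 2 ≤ n) : Group.FG ↥(Kn n) := by
  rw [Group.fg_iff_subgroup_fg, Kn_eq_closure_incidentGens (l := ⟨n - 1, by omega⟩) rfl,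
    Subgroup.fg_iff]
  exact ⟨_, rfl, finite_incidentGens _⟩
end

section
/- For every n ≥ 2 there exists a group homomorphism r : K_n → ℤ^{n−1} with r(α_{in}) = e_i for each 1 ≤ i ≤ n−1 (where e_i is the i-th standard basis vector); consequently the composition of the homomorphism ℤ^{n−1} → K_n, e_i ↦ α_{in}, with r is the identity on ℤ^{n−1}. -/
/-!
For `φ ∈ PΣ_n` write `φ(x_i) = w_i x_i w_i⁻¹`. The `i`-th coordinate of `r φ` is the exponent sum
of `x_n` in `w_i`. The conjugator `w_i` is not unique, but this exponent sum is: let `F_n` act on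
the affine line over `ℚ`, with `x_n` acting by `t ↦ 2 t`, `x_i` by `t ↦ t + 1`, and the other
generators trivially. Then `w x_i w⁻¹` acts as the translation by `2 ^ e`, where `e` is the exponent
sum of `x_n` in `w`, so `e` can be read off from `w x_i w⁻¹`. Additivity holds because, if
`ψ(x_i) = v_i x_i v_i⁻¹`, then `φ(v_i) w_i` is a conjugator for `φ ψ`, and elements of `PΣ_n`
preserve exponent sums. This defines the retraction on all of `PΣ_n`, and `r` is its restriction
to `K_n`.
-/

open FreeGroup

lemma affineEquiv_mul_constVAdd_mul_inv {k V P : Type*} [Ring k] [AddCommGroup V] [Module k V]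
    [AddTorsor V P] (e : P ≃ᵃ[k] P) (v : V) :
    e * AffineEquiv.constVAdd k P v * e⁻¹ = AffineEquiv.constVAdd k P (e.linear v) := by
  ext p
  simp [AffineEquiv.inv_def, AffineEquiv.map_vadd]

section ExponentSum

variable {α : Type*} [DecidableEq α]

/-- The exponent sum of the generator `x_j`, written multiplicatively so that it is a monoid
homomorphism. -/
def exponentSum (j : α) : FreeGroup α →* Multiplicative ℤ :=
  FreeGroup.lift (Pi.mulSingle j (Multiplicative.ofAdd 1))

@[simp]
lemma exponentSum_of_self (j : α) : exponentSum j (of j) = Multiplicative.ofAdd 1 := by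
  simp [exponentSum]

/-- The action of a free group on the affine line over `ℚ` in which `x_j` acts by `t ↦ 2 t`,
`x_i` by `t ↦ t + 1` (when `i ≠ j`), and every other generator trivially. -/
def affineLineAction (i j : α) : FreeGroup α →* (ℚ ≃ᵃ[ℚ] ℚ) :=
  FreeGroup.lift fun k =>
    if k = j then (LinearEquiv.smulOfNeZero ℚ ℚ 2 two_ne_zero).toAffineEquiv
    else if k = i then AffineEquiv.constVAdd ℚ ℚ 1 else 1

lemma affineLineAction_of_left {i j : α} (hij : i ≠ j) :
    affineLineAction i j (of i) = AffineEquiv.constVAdd ℚ ℚ 1 := by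
  simp [affineLineAction, hij]

lemma linear_affineLineAction (i j : α) (w : FreeGroup α) (t : ℚ) :
    (affineLineAction i j w).linear t = 2 ^ (exponentSum j w).toAdd * t := by
  have linear_dilation (s : ℚ) :
      (LinearEquiv.smulOfNeZero ℚ ℚ 2 two_ne_zero).toAffineEquiv.linear s = 2 * s := rfl
  have linear_eq : AffineEquiv.linearHom.comp (affineLineAction i j) =
      (DistribMulAction.toModuleAut ℚ ℚ).comp
        ((zpowersHom ℚˣ (Units.mk0 2 two_ne_zero)).comp (exponentSum j)) := by
    ext k s
    by_cases hj : k = j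
    · subst hj
      simp [affineLineAction, linear_dilation, Units.smul_def]
    · by_cases hi : k = i
      · subst hi
        simp [affineLineAction, exponentSum, hj]
      · simp [affineLineAction, exponentSum, hj, hi, AffineEquiv.one_def]
  simpa [Units.smul_def] using LinearEquiv.congr_fun (DFunLike.congr_fun linear_eq w) t

lemma affineLineAction_conj {i j : α} (hij : i ≠ j) (w : FreeGroup α) :
    affineLineAction i j (w * of i * w⁻¹) =
      AffineEquiv.constVAdd ℚ ℚ (2 ^ (exponentSum j w).toAdd) := by
  rw [_root_.map_mul, _root_.map_mul, _root_.map_inv, affineLineAction_of_left hij,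
    affineEquiv_mul_constVAdd_mul_inv, linear_affineLineAction, mul_one]

lemma exponentSum_eq_of_conj_eq {i j : α} (hij : i ≠ j) {v w : FreeGroup α}
    (h : v * of i * v⁻¹ = w * of i * w⁻¹) : exponentSum j v = exponentSum j w := by
  have translations_eq := congrArg (affineLineAction i j) h
  rw [affineLineAction_conj hij, affineLineAction_conj hij] at translations_eq
  have powers_eq : (2 : ℚ) ^ (exponentSum j v).toAdd = 2 ^ (exponentSum j w).toAdd := by
    simpa using DFunLike.congr_fun translations_eq 0
  exact Multiplicative.toAdd.injective
    (zpow_right_injective₀ two_pos (OfNat.ofNat_ne_one 2) powers_eq)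

lemma exponentSum_map_of_forall_conj {F : Type*} [FunLike F (FreeGroup α) (FreeGroup α)]
    [MonoidHomClass F (FreeGroup α) (FreeGroup α)] {φ : F}
    (hφ : ∀ k, ∃ v, φ (of k) = v * of k * v⁻¹) (j : α) (w : FreeGroup α) :
    exponentSum j (φ w) = exponentSum j w := by
  have comp_eq : (exponentSum j).comp (φ : FreeGroup α →* FreeGroup α) = exponentSum j := by
    ext k
    obtain ⟨v, hv⟩ := hφ k
    simp [hv]
  exact DFunLike.congr_fun comp_eq w

end ExponentSum

section ConjugatorExponent

variable {n : ℕ} {i j : Fin n}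

/-- The exponent sum of `x_j` in a word conjugating `x_i` to `φ(x_i)`. The word is chosen, but for
`i ≠ j` the result does not depend on the choice. -/
noncomputable def conjugatorExponent (i j : Fin n) (φ : PSigmaAut n) : Multiplicative ℤ :=
  exponentSum j (φ.2 i).choose

lemma conjugatorExponent_eq (hij : i ≠ j) {φ : PSigmaAut n} {w : FG n}
    (h : φ.1 (of i) = w * of i * w⁻¹) : conjugatorExponent i j φ = exponentSum j w :=
  exponentSum_eq_of_conj_eq hij ((φ.2 i).choose_spec.symm.trans h)

lemma conjugatorExponent_mul (hij : i ≠ j) (φ ψ : PSigmaAut n) :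
    conjugatorExponent i j (φ * ψ) = conjugatorExponent i j φ * conjugatorExponent i j ψ := by
  obtain ⟨v, hv⟩ := φ.2 i
  obtain ⟨w, hw⟩ := ψ.2 i
  have hvw : (φ * ψ).1 (of i) = (φ.1 w * v) * of i * (φ.1 w * v)⁻¹ := by
    simp [hv, hw, mul_assoc]
  rw [conjugatorExponent_eq hij hvw, conjugatorExponent_eq hij hv, conjugatorExponent_eq hij hw,
    _root_.map_mul, exponentSum_map_of_forall_conj φ.2, mul_comm]

/-- `conjugatorExponent` as a homomorphism on `PΣ_n`. -/
noncomputable def conjugatorExponentHom (hij : i ≠ j) : PSigmaAut n →* Multiplicative ℤ :=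
  MonoidHom.mk' (conjugatorExponent i j) (conjugatorExponent_mul hij)

lemma conjugatorExponent_alphaP_self (hij : i ≠ j) :
    conjugatorExponent i j (alphaP n i j) = Multiplicative.ofAdd 1 := by
  rw [conjugatorExponent_eq hij (w := of j) (by simp [alphaP, alphaAut_apply_of n hij]),
    exponentSum_of_self]

lemma conjugatorExponent_alphaP_of_ne (hij : i ≠ j) {l m : Fin n} (hil : i ≠ l) (hlm : l ≠ m) :
    conjugatorExponent i j (alphaP n l m) = 1 := by
  rw [conjugatorExponent_eq hij (w := 1) (by simp [alphaP, alphaAut_apply_of n hlm, hil]),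
    _root_.map_one]

end ConjugatorExponent

lemma monoidHom_multiplicative_pi_int_ext {ι M : Type*} [Finite ι] [DecidableEq ι] [CommMonoid M]
    {f g : Multiplicative (ι → ℤ) →* M}
    (h : ∀ i, f (Multiplicative.ofAdd (Pi.single i 1)) =
      g (Multiplicative.ofAdd (Pi.single i 1))) : f = g := by
  apply MonoidHom.toAdditiveRight.injective
  refine AddMonoidHom.functions_ext' _ _ _ fun i => ?_
  ext1
  exact congrArg Additive.ofMul (h i)

theorem statement9_general {n : ℕ} {ι : Type*} [DecidableEq ι] {σ : ι → Fin n}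
    (hσ : Function.Injective σ) {j : Fin n} (hj : ∀ k, σ k ≠ j) :
    ∃ r : PSigmaAut n →* Multiplicative (ι → ℤ),
      (∀ k, r (alphaP n (σ k) j) = Multiplicative.ofAdd (Pi.single k 1)) ∧
      ∀ f : Multiplicative (ι → ℤ) →* PSigmaAut n,
        (∀ k, f (Multiplicative.ofAdd (Pi.single k 1)) = alphaP n (σ k) j) →
          r.comp f = MonoidHom.id _ := by
  have : Finite ι := Finite.of_injective σ hσ
  let r : PSigmaAut n →* Multiplicative (ι → ℤ) :=
    (MulEquiv.funMultiplicative ι ℤ).symm.toMonoidHom.comp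
      (MonoidHom.pi fun k => conjugatorExponentHom (hj k))
  have r_alphaP (k : ι) : r (alphaP n (σ k) j) = Multiplicative.ofAdd (Pi.single k 1) := by
    apply (MulEquiv.funMultiplicative ι ℤ).injective
    funext l
    obtain rfl | hlk := eq_or_ne l k
    · simp [r, conjugatorExponentHom, conjugatorExponent_alphaP_self (hj l)]
    · simp [r, conjugatorExponentHom,
        conjugatorExponent_alphaP_of_ne (hj l) (hσ.ne hlk) (hj k), hlk]
  refine ⟨r, r_alphaP, fun f hf => monoidHom_multiplicative_pi_int_ext fun k => ?_⟩
  rw [MonoidHom.comp_apply, hf, r_alphaP, MonoidHom.id_apply]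

/-- STATEMENT 9: For every `n ≥ 2` there is a group homomorphism `r : K_n → ℤ^{n-1}` with
`r(α_{in}) = e_i` for each `1 ≤ i ≤ n - 1`; consequently the composition of the
homomorphism `ℤ^{n-1} → K_n`, `e_i ↦ α_{in}`, with `r` is the identity on `ℤ^{n-1}`. -/
theorem statement9 (n : ℕ) (hn : 2 ≤ n) :
    ∃ r : ↥(Kn n) →* Multiplicative (Fin (n - 1) → ℤ),
      (∀ (i : Fin (n - 1)) (g : Kn n),
          (g : ↥(PSigmaAut n)) =
              alphaP n (Fin.castLE (Nat.sub_le n 1) i) ⟨n - 1, by omega⟩ →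
            r g = Multiplicative.ofAdd (Pi.single i 1)) ∧
      ∀ f : Multiplicative (Fin (n - 1) → ℤ) →* ↥(Kn n),
        (∀ i : Fin (n - 1),
            ((f (Multiplicative.ofAdd (Pi.single i 1))) : ↥(PSigmaAut n)) =
              alphaP n (Fin.castLE (Nat.sub_le n 1) i) ⟨n - 1, by omega⟩) →
          r.comp f = MonoidHom.id _ := by
  obtain ⟨r, hr, hrf⟩ := statement9_general (Fin.castLE_injective (Nat.sub_le n 1))
    (j := ⟨n - 1, by omega⟩) fun i => Fin.ne_of_lt i.isLt
  exact ⟨r.comp (Kn n).subtype, fun i g hg => (congrArg r hg).trans (hr i),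
    fun f hf => hrf ((Kn n).subtype.comp f) hf⟩
end
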